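/- Let m ∈ ℕ₀ be even and let k > 0. Then the function U(x) = β^(m)(k x) / (β^(m)(x))^k on (0, ∞) is increasing if k > 1 and decreasing if 0 < k ≤ 1. -/

import Mathlib

/-!
Nielsen's β-function is the moment generating function of `t ↦ -t` under the measure with density
`1 / (1 + e^{-t})` on `(0, ∞)`, so for `x > 0` its `m`-th derivative is
`∫₀^∞ (-t)^m e^{-x t} / (1 + e^{-t}) dt`. For even `m` the weight `(-t)^m / (1 + e^{-t})` is
positive, and a positive mixture of the log-affine functions `x ↦ e^{-x t}` is log-convex
(`convexOn_log_integral_mul_exp`). So `g = log β^(m)` is convex on `(0, ∞)`, and its secant slope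
over `[x, y]` is at most the one over `[k x, k y]` when `k ≥ 1`, at least that one when `k ≤ 1`.
Multiplying by `k (y - x)` compares `k (g y - g x)` with `g (k y) - g (k x)`, which is the
monotonicity of `log U = g (k x) - k g x`.
-/

open Real MeasureTheory Set

/-- Nielsen's beta function: `β(x) = ∫₀^∞ e^{-x t} / (1 + e^{-t}) dt`. -/
noncomputable def nielsenBeta (x : ℝ) : ℝ :=
  ∫ t in Set.Ioi (0:ℝ), Real.exp (-x * t) / (1 + Real.exp (-t))

/-- The measure on `(0, ∞)` with density `1 / (1 + e^{-t})`. -/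
noncomputable def nielsenMeasure : Measure ℝ :=
  (volume.restrict (Ioi 0)).withDensity fun t => ENNReal.ofReal (1 / (1 + exp (-t)))

lemma integral_nielsenMeasure (f : ℝ → ℝ) :
    ∫ t, f t ∂nielsenMeasure = ∫ t in Ioi 0, (1 / (1 + exp (-t))) * f t := by
  rw [nielsenMeasure, integral_withDensity_eq_integral_toReal_smul (by fun_prop) (by simp)]
  congr 1 with t
  rw [ENNReal.toReal_ofReal (by positivity), smul_eq_mul]

lemma integrable_nielsenMeasure (f : ℝ → ℝ) :
    Integrable f nielsenMeasure ↔ IntegrableOn (fun t => (1 / (1 + exp (-t))) * f t) (Ioi 0) := by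
  rw [nielsenMeasure, integrable_withDensity_iff_integrable_smul' (by fun_prop) (by simp),
    IntegrableOn]
  refine iff_of_eq (congrArg (fun h => Integrable h (volume.restrict (Ioi 0))) ?_)
  funext t
  rw [ENNReal.toReal_ofReal (by positivity), smul_eq_mul]

lemma nielsenBeta_eq_mgf : nielsenBeta = ProbabilityTheory.mgf (fun t => -t) nielsenMeasure := by
  funext x
  rw [ProbabilityTheory.mgf, integral_nielsenMeasure, nielsenBeta]
  congr 1 with t
  rw [neg_mul, mul_neg]
  ring

lemma integrable_exp_nielsenMeasure {x : ℝ} (hx : 0 < x) :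
    Integrable (fun t => exp (x * -t)) nielsenMeasure := by
  rw [integrable_nielsenMeasure]
  refine Integrable.mono' (integrableOn_exp_mul_Ioi (a := -x) (by linarith) 0)
    (by fun_prop) (Filter.Eventually.of_forall fun t => ?_)
  rw [Real.norm_of_nonneg (by positivity), mul_neg, neg_mul]
  refine mul_le_of_le_one_left (exp_pos _).le ?_
  rw [div_le_one (by positivity)]
  linarith [exp_pos (-t)]

lemma mem_interior_integrableExpSet_nielsen {x : ℝ} (hx : 0 < x) :
    x ∈ interior (ProbabilityTheory.integrableExpSet (fun t => -t) nielsenMeasure) :=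
  interior_maximal (fun _ hy => integrable_exp_nielsenMeasure hy) isOpen_Ioi hx

lemma iteratedDeriv_nielsenBeta (m : ℕ) {x : ℝ} (hx : 0 < x) :
    iteratedDeriv m nielsenBeta x = ∫ t, (-t) ^ m * exp (x * -t) ∂nielsenMeasure := by
  rw [nielsenBeta_eq_mgf,
    ProbabilityTheory.iteratedDeriv_mgf (mem_interior_integrableExpSet_nielsen hx)]

lemma integrable_pow_mul_exp_nielsen (m : ℕ) {x : ℝ} (hx : 0 < x) :
    Integrable (fun t => (-t) ^ m * exp (x * -t)) nielsenMeasure :=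
  ProbabilityTheory.integrable_pow_mul_exp_of_mem_interior_integrableExpSet
    (mem_interior_integrableExpSet_nielsen hx) m

lemma integral_pow_mul_exp_nielsen_pos {m : ℕ} (hm : Even m) {x : ℝ} (hx : 0 < x) :
    0 < ∫ t, (-t) ^ m * exp (x * -t) ∂nielsenMeasure := by
  have hi := (integrable_nielsenMeasure _).1 (integrable_pow_mul_exp_nielsen m hx)
  rw [integral_nielsenMeasure, setIntegral_pos_iff_support_of_nonneg_ae _ hi]
  · have hsub : Ioi (0 : ℝ) ⊆ Function.support
        (fun t : ℝ => (1 / (1 + exp (-t))) * ((-t) ^ m * exp (x * -t))) := by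
      intro t ht
      have ht0 : (-t) ^ m ≠ 0 := pow_ne_zero _ (neg_ne_zero.2 (ne_of_gt ht))
      have : 1 / (1 + exp (-t)) ≠ 0 := by positivity
      exact mul_ne_zero this (mul_ne_zero ht0 (exp_pos _).ne')
    rw [inter_eq_right.2 hsub]
    simp
  · refine Filter.Eventually.of_forall fun t => ?_
    have := hm.pow_nonneg (-t)
    simp only [Pi.zero_apply]
    positivity

/-- A positive mixture of log-affine functions is log-convex. With `F` the integral, this is the
convexity of `exp` applied to `x X - log F x` and `y X - log F y` and integrated. -/
lemma convexOn_log_integral_mul_exp {Ω : Type*} [MeasurableSpace Ω] {μ : Measure Ω}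
    {w X : Ω → ℝ} {s : Set ℝ} (hs : Convex ℝ s) (hw : ∀ t, 0 ≤ w t)
    (hi : ∀ x ∈ s, Integrable (fun t => w t * exp (x * X t)) μ)
    (hpos : ∀ x ∈ s, 0 < ∫ t, w t * exp (x * X t) ∂μ) :
    ConvexOn ℝ s (fun x => log (∫ t, w t * exp (x * X t) ∂μ)) := by
  refine ⟨hs, fun x hx y hy a b ha hb hab => ?_⟩
  have hz := hs hx hy ha hb hab
  simp only [smul_eq_mul] at hz ⊢
  set F : ℝ → ℝ := fun x => ∫ t, w t * exp (x * X t) ∂μ with hF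
  change log (F (a * x + b * y)) ≤ a * log (F x) + b * log (F y)
  rw [log_le_iff_le_exp (hpos _ hz)]
  set c := a * log (F x) + b * log (F y) with hc
  have hexp : ∀ u ∈ s, exp (-log (F u)) * F u = 1 := fun u hu => by
    rw [exp_neg, exp_log (hpos u hu)]
    exact inv_mul_cancel₀ (hpos u hu).ne'
  have key : exp (-c) * F (a * x + b * y) ≤ 1 := by
    calc exp (-c) * F (a * x + b * y)
        = ∫ t, exp (-c) * (w t * exp ((a * x + b * y) * X t)) ∂μ :=
          (integral_const_mul _ _).symm
      _ ≤ ∫ t, (a * exp (-log (F x)) * (w t * exp (x * X t))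
            + b * exp (-log (F y)) * (w t * exp (y * X t))) ∂μ := by
          refine integral_mono ((hi _ hz).const_mul _)
            (((hi x hx).const_mul _).add ((hi y hy).const_mul _)) fun t => ?_
          have h := convexOn_exp.2 (mem_univ (x * X t - log (F x)))
            (mem_univ (y * X t - log (F y))) ha hb hab
          simp only [smul_eq_mul] at h
          have h2 := mul_le_mul_of_nonneg_left h (hw t)
          have e1 : a * (x * X t - log (F x)) + b * (y * X t - log (F y))
              = -c + (a * x + b * y) * X t := by rw [hc]; ring
          rw [e1, exp_add, sub_eq_neg_add, exp_add, sub_eq_neg_add, exp_add] at h2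
          simp only
          linarith
      _ = a * (exp (-log (F x)) * F x) + b * (exp (-log (F y)) * F y) := by
          rw [integral_add ((hi x hx).const_mul _) ((hi y hy).const_mul _),
            integral_const_mul, integral_const_mul]
          simp only [hF]
          ring
      _ = 1 := by rw [hexp x hx, hexp y hy]; linarith
  rwa [exp_neg, inv_mul_le_iff₀ (exp_pos _), mul_one] at key

/-- Secant slopes of a convex function increase when both endpoints move to the right. -/
lemma ConvexOn.secant_le_secant {s : Set ℝ} {g : ℝ → ℝ} (hg : ConvexOn ℝ s g) {a b c d : ℝ}
    (ha : a ∈ s) (hb : b ∈ s) (hc : c ∈ s) (hd : d ∈ s)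
    (hab : a < b) (hcd : c < d) (hac : a ≤ c) (hbd : b ≤ d) :
    (g b - g a) / (b - a) ≤ (g d - g c) / (d - c) := by
  have h1 := hg.secant_mono ha hb hd hab.ne' (hab.trans_le hbd).ne' hbd
  have h2 := hg.secant_mono hd ha hc (hab.trans_le hbd).ne hcd.ne hac
  rw [← neg_sub (g d) (g a), ← neg_sub d a, neg_div_neg_eq,
    ← neg_sub (g d) (g c), ← neg_sub d c, neg_div_neg_eq] at h2
  exact h1.trans h2

lemma convexOn_log_iteratedDeriv_nielsenBeta {m : ℕ} (hm : Even m) :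
    ConvexOn ℝ (Ioi 0) (fun x => log (iteratedDeriv m nielsenBeta x)) :=
  (convexOn_log_integral_mul_exp (convex_Ioi 0) (fun t => hm.pow_nonneg (-t))
    (fun _ hx => integrable_pow_mul_exp_nielsen m hx)
    (fun _ hx => integral_pow_mul_exp_nielsen_pos hm hx)).congr
    fun _ hx => by simp only [iteratedDeriv_nielsenBeta m hx]

theorem iteratedDeriv_nielsenBeta_ratio_monotone (m : ℕ) (hm : Even m) (k : ℝ) (hk : 0 < k) :
    (1 < k → MonotoneOn
        (fun x : ℝ => iteratedDeriv m nielsenBeta (k * x) / iteratedDeriv m nielsenBeta x ^ k)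
        (Set.Ioi 0)) ∧
    (k ≤ 1 → AntitoneOn
        (fun x : ℝ => iteratedDeriv m nielsenBeta (k * x) / iteratedDeriv m nielsenBeta x ^ k)
        (Set.Ioi 0)) := by
  have hpos : ∀ x ∈ Ioi (0 : ℝ), 0 < iteratedDeriv m nielsenBeta x := fun x hx => by
    rw [iteratedDeriv_nielsenBeta m hx]
    exact integral_pow_mul_exp_nielsen_pos hm hx
  have hconv := convexOn_log_iteratedDeriv_nielsenBeta hm
  set f := iteratedDeriv m nielsenBeta
  have hkm : ∀ x ∈ Ioi (0 : ℝ), k * x ∈ Ioi (0 : ℝ) := fun x hx => mul_pos hk hx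
  have hU : ∀ x ∈ Ioi (0 : ℝ), f (k * x) / f x ^ k = exp (log (f (k * x)) - k * log (f x)) :=
    fun x hx => by
      rw [exp_sub, exp_log (hpos _ (hkm x hx)), rpow_def_of_pos (hpos x hx), mul_comm (log (f x))]
  constructor
  · intro h1 x hx y hy hxy
    rcases hxy.eq_or_lt with rfl | hlt
    · exact le_rfl
    have hx' : 0 < x := hx
    have hy' : 0 < y := hy
    have h := hconv.secant_le_secant hx hy (hkm x hx) (hkm y hy) hlt
      (mul_lt_mul_of_pos_left hlt hk) (le_mul_of_one_le_left hx'.le h1.le)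
      (le_mul_of_one_le_left hy'.le h1.le)
    rw [← mul_sub k, div_le_div_iff₀ (sub_pos.2 hlt) (mul_pos hk (sub_pos.2 hlt)), ← mul_assoc,
      mul_le_mul_iff_left₀ (sub_pos.2 hlt)] at h
    simp only [hU x hx, hU y hy]
    exact exp_le_exp.2 (by linarith)
  · intro h1 x hx y hy hxy
    rcases hxy.eq_or_lt with rfl | hlt
    · exact le_rfl
    have hx' : 0 < x := hx
    have hy' : 0 < y := hy
    have h := hconv.secant_le_secant (hkm x hx) (hkm y hy) hx hy
      (mul_lt_mul_of_pos_left hlt hk) hlt (mul_le_of_le_one_left hx'.le h1)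
      (mul_le_of_le_one_left hy'.le h1)
    rw [← mul_sub k, div_le_div_iff₀ (mul_pos hk (sub_pos.2 hlt)) (sub_pos.2 hlt), ← mul_assoc,
      mul_le_mul_iff_left₀ (sub_pos.2 hlt)] at h
    simp only [hU x hx, hU y hy]
    exact exp_le_exp.2 (by linarith)
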